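/- arXiv:cs/0401010 — 7 statements merged into one kernel-verified Lean document; each statement's English description precedes it below -/
import Mathlib

section
/- Fix a positive integer N ≥ 1 and per-unit costs m ≥ 0, a ≥ 0, r ≥ 0, s ≥ 0 with at least one of m, a, r nonzero. If C0(N) = Ci(N), then N = 2, or else: if m = 0 and r ≠ a then N = r/(r−a), and if m ≠ 0 then N = (a−r)/(2m) + √(((a−r)/(2m))² + r/m). In particular, if m = 0 and r = a then C0(N) = Ci(N) forces N = 2. -/
/-!
Clearing denominators, `N² (C0 - Ci) = (N - 2) (m N² - (a - r) N - r)`, in which `s` cancels. If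
`m = 0` the second factor is linear in `N`. If `m > 0` its roots have product `-r / m ≤ 0`, so a
positive root is the larger one.
-/

section Equations

theorem mul_eq_iff_ne_zero_and_eq_div {K : Type*} [Field K] {b c x : K} (h : b ≠ 0 ∨ c ≠ 0) :
    b * x = c ↔ b ≠ 0 ∧ x = c / b := by
  by_cases hb : b = 0
  · have hc : c ≠ 0 := h.resolve_left (not_not.mpr hb)
    simp [hb, hc.symm]
  · simp [hb, eq_div_iff hb, mul_comm x]

theorem sq_eq_iff_eq_add_sqrt_of_pos {p q x : ℝ} (hq : 0 ≤ q) (hx : 0 < x) :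
    x ^ 2 = 2 * p * x + q ↔ x = p + √(p ^ 2 + q) := by
  have complete_square : x ^ 2 = 2 * p * x + q ↔ (x - p) ^ 2 = p ^ 2 + q := by
    constructor <;> intro h <;> linear_combination h
  rw [complete_square]
  constructor
  · intro h
    have mul_sub_nonneg : 0 ≤ 2 * x * (x - p) :=
      calc
        0 ≤ x ^ 2 + q := by positivity
        _ = 2 * x * (x - p) := by linear_combination -h
    have sub_nonneg : 0 ≤ x - p := nonneg_of_mul_nonneg_right mul_sub_nonneg (by positivity)
    rw [← h, Real.sqrt_sq sub_nonneg, add_sub_cancel]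
  · intro h
    rw [sub_eq_of_eq_add' h, Real.sq_sqrt (by positivity)]

theorem mul_sq_eq_iff_eq_add_sqrt_of_pos {m b c x : ℝ} (hm : 0 < m) (hc : 0 ≤ c) (hx : 0 < x) :
    m * x ^ 2 = b * x + c ↔ x = b / (2 * m) + √((b / (2 * m)) ^ 2 + c / m) := by
  rw [← sq_eq_iff_eq_add_sqrt_of_pos (div_nonneg hc hm.le) hx]
  field_simp

end Equations

section StarCosts

variable {K : Type*} [Field K]

/-- The total cost `C0(N)` of the center of a star network on `N` nodes, with unit costs `m` for
maintenance, `a` for access, `r` for routing and `s` for service. The number of nodes is an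
arbitrary field element. -/
def starCenterCost (m a r s N : K) : K :=
  m * (N - 1) + s / N + a * (N - 1) / N + r * (N - 1) * (N - 2) / N ^ 2

/-- The total cost `Ci(N)` of a peripheral node of a star network on `N` nodes, with unit costs
as in `starCenterCost`; peripheral nodes forward nothing, so no routing cost enters. -/
def starPeripheralCost (m a s N : K) : K :=
  m + (s + a * (2 * N - 3)) / N

variable {m a r s N : K}

theorem starCenterCost_sub_starPeripheralCost (hN : N ≠ 0) :
    starCenterCost m a r s N - starPeripheralCost m a s N =
      (N - 2) * (m * N ^ 2 - ((a - r) * N + r)) / N ^ 2 := by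
  unfold starCenterCost starPeripheralCost
  field_simp
  ring

theorem starCenterCost_eq_starPeripheralCost_iff (hN : N ≠ 0) :
    starCenterCost m a r s N = starPeripheralCost m a s N ↔
      N = 2 ∨ m * N ^ 2 = (a - r) * N + r := by
  rw [← sub_eq_zero, starCenterCost_sub_starPeripheralCost hN,
    div_eq_iff (pow_ne_zero 2 hN), zero_mul, mul_eq_zero, sub_eq_zero, sub_eq_zero]

end StarCosts

theorem star_cost_equal_fixed_N_general {m a r s N : ℝ} (hN : 0 < N) (hm : 0 ≤ m) (hr : 0 ≤ r)
    (hnz : m ≠ 0 ∨ a ≠ 0 ∨ r ≠ 0) :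
    starCenterCost m a r s N = starPeripheralCost m a s N ↔
      N = 2 ∨
        ((m = 0 → r ≠ a ∧ N = r / (r - a)) ∧
         (m ≠ 0 → N = (a - r) / (2 * m) + √(((a - r) / (2 * m)) ^ 2 + r / m))) := by
  rw [starCenterCost_eq_starPeripheralCost_iff hN.ne']
  refine or_congr_right ?_
  rcases hm.eq_or_lt' with rfl | hm_pos
  · have coeff_ne_zero : r - a ≠ 0 ∨ r ≠ 0 := by grind
    have linear : 0 * N ^ 2 = (a - r) * N + r ↔ (r - a) * N = r := by
      constructor <;> intro h <;> linear_combination h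
    rw [linear, mul_eq_iff_ne_zero_and_eq_div coeff_ne_zero, sub_ne_zero]
    simp
  · simp [hm_pos.ne', mul_sq_eq_iff_eq_add_sqrt_of_pos hm_pos hr hN]

/-- **Star network cost symmetry, fixed `N`.**
In a star network on `N ≥ 1` nodes with center cost
`C0(N) = m(N-1) + s/N + a(N-1)/N + r(N-1)(N-2)/N^2` and peripheral cost
`Ci(N) = m + (s + a(2N-3))/N`, with nonnegative per-unit costs at least one of
`m`, `a`, `r` nonzero: if `C0(N) = Ci(N)` then either `N = 2`, or else
(if `m = 0` then necessarily `r ≠ a` and `N = r/(r-a)`, and if `m ≠ 0` then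
`N = (a-r)/(2m) + √(((a-r)/(2m))² + r/m)`).  In particular, when `m = 0` and
`r = a`, the equality `C0(N) = Ci(N)` forces `N = 2`. -/
theorem star_cost_equal_fixed_N (m a r s : ℝ) (N : ℕ) (hN : 1 ≤ N)
    (hm : 0 ≤ m) (ha : 0 ≤ a) (hr : 0 ≤ r) (hs : 0 ≤ s)
    (hnz : m ≠ 0 ∨ a ≠ 0 ∨ r ≠ 0)
    (heq : m * ((N : ℝ) - 1) + s / (N : ℝ) + a * ((N : ℝ) - 1) / (N : ℝ)
          + r * ((N : ℝ) - 1) * ((N : ℝ) - 2) / (N : ℝ) ^ 2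
        = m + (s + a * (2 * (N : ℝ) - 3)) / (N : ℝ)) :
    N = 2 ∨
      ((m = 0 → r ≠ a ∧ (N : ℝ) = r / (r - a)) ∧
       (m ≠ 0 → (N : ℝ) = (a - r) / (2 * m)
          + Real.sqrt (((a - r) / (2 * m)) ^ 2 + r / m))) := by
  exact_mod_cast (star_cost_equal_fixed_N_general (Nat.cast_pos.mpr hN) hm hr hnz).mp heq
end

section
/- In the de Bruijn digraph B(Δ, D), let c be a constant string (c_p = h for all positions p, for some fixed symbol h). Then under shortest-path routing, c never lies in the interior of a shortest directed path: for all vertices j ≠ c and l ≠ c from which and to which c is reachable, dist(j, l) < dist(j, c) + dist(c, l). Equivalently, no shortest directed path from j to l contains c as a vertex other than its endpoints. -/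
/-- Adjacency in the de Bruijn digraph `B(Δ, D)`: there is an edge
`u → v` iff the first `D−1` symbols of `v` equal the last `D−1` symbols
of `u`. -/
def deBruijnAdj {Δ D : ℕ} (u v : Fin D → Fin Δ) : Prop :=
  ∀ (k : ℕ) (h : k + 1 < D), v ⟨k, Nat.lt_of_succ_lt h⟩ = u ⟨k + 1, h⟩

/-- `f` is a directed walk of length `n` in the de Bruijn digraph. -/
def deBruijnWalk {Δ D : ℕ} (n : ℕ) (f : ℕ → Fin D → Fin Δ) : Prop :=
  ∀ k < n, deBruijnAdj (f k) (f (k + 1))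

/-- `y` is reachable from `x` by a directed walk in the de Bruijn digraph. -/
def deBruijnReachable {Δ D : ℕ} (x y : Fin D → Fin Δ) : Prop :=
  ∃ (n : ℕ) (f : ℕ → Fin D → Fin Δ), f 0 = x ∧ f n = y ∧ deBruijnWalk n f

/-- Directed graph distance in the de Bruijn digraph: the length of a
shortest directed walk from `x` to `y`. -/
noncomputable def deBruijnDist {Δ D : ℕ} (x y : Fin D → Fin Δ) : ℕ :=
  sInf {n : ℕ | ∃ f : ℕ → Fin D → Fin Δ, f 0 = x ∧ f n = y ∧ deBruijnWalk n f}

/-!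
A walk of length `n` from `x` to `y` exists exactly when deleting the first `n` symbols of `x`
leaves a prefix of `y`. If `c` is constant, reading it one position earlier makes no difference, so
walks of lengths `m + 1` from `x` to `c` and `n + 1` from `c` to `y` force the overlap that already
gives a walk of length `m + n + 1` from `x` to `y`.
-/

section

variable {Δ D : ℕ} {m n : ℕ} {x y z c : Fin D → Fin Δ}

/-- The string `x` with its first `n` symbols deleted is a prefix of `y`; this characterises the
existence of a walk of length `n` from `x` to `y`. Quantifying over both positions `i` and
`p = i + n` avoids bound proofs inside the equation; for `D ≤ n` the condition is vacuous. -/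
def deBruijnOverlap (n : ℕ) (x y : Fin D → Fin Δ) : Prop :=
  ∀ i p : Fin D, (p : ℕ) = i + n → y i = x p

theorem deBruijnOverlap_refl (x : Fin D → Fin Δ) : deBruijnOverlap 0 x x :=
  fun _ _ hp => congrArg x (Fin.ext hp.symm)

theorem deBruijnOverlap.eq_of_zero (h : deBruijnOverlap 0 x y) : x = y :=
  funext fun i => (h i i rfl).symm

theorem deBruijnOverlap.trans (hxy : deBruijnOverlap m x y) (hyz : deBruijnOverlap n y z) :
    deBruijnOverlap (m + n) x z := by
  intro i p hp
  let q : Fin D := ⟨i + n, by omega⟩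
  calc
    z i = y q := hyz i q rfl
    _ = x p := hxy q p (by simp only [q]; omega)

theorem deBruijnAdj.overlap (h : deBruijnAdj x y) : deBruijnOverlap 1 x y := by
  rintro i ⟨_, hi⟩ rfl
  exact h i hi

theorem deBruijnWalk.overlap {f : ℕ → Fin D → Fin Δ} (hf : deBruijnWalk n f) :
    deBruijnOverlap n (f 0) (f n) := by
  induction n with
  | zero => exact deBruijnOverlap_refl (f 0)
  | succ n ih =>
    have initial : deBruijnWalk n f := fun k hk => hf k (Nat.lt_succ_of_lt hk)
    exact (ih initial).trans (hf n n.lt_succ_self).overlap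

theorem deBruijnOverlap.exists_walk (h : deBruijnOverlap n x y) :
    ∃ f : ℕ → Fin D → Fin Δ, f 0 = x ∧ f n = y ∧ deBruijnWalk n f := by
  -- Slide a window along `x` followed by the rest of `y`; when `D < n`, truncated subtraction fills
  -- the gap between the two strings with copies of the first symbol of `y`.
  let f : ℕ → Fin D → Fin Δ := fun t i =>
    if hi : i + t < D then x ⟨i + t, hi⟩ else y ⟨i - (n - t), by omega⟩
  refine ⟨f, ?_, ?_, ?_⟩
  · funext i
    simp [f]
  · funext i
    by_cases hi : i + n < D
    · simpa [f, hi] using (h i ⟨i + n, hi⟩ rfl).symm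
    · simp [f, hi]
  · intro t ht k hk
    have window_end : k + (t + 1) = k + 1 + t := by omega
    have tail_index : k - (n - (t + 1)) = k + 1 - (n - t) := by omega
    simp only [f, window_end, tail_index]

theorem deBruijnDist_le_of_overlap (h : deBruijnOverlap n x y) : deBruijnDist x y ≤ n :=
  Nat.sInf_le h.exists_walk

theorem deBruijnReachable.overlap_dist (h : deBruijnReachable x y) :
    deBruijnOverlap (deBruijnDist x y) x y := by
  obtain ⟨f, hfx, hfy, hf⟩ : ∃ f : ℕ → Fin D → Fin Δ,
      f 0 = x ∧ f (deBruijnDist x y) = y ∧ deBruijnWalk (deBruijnDist x y) f := Nat.sInf_mem h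
  simpa only [hfx, hfy] using hf.overlap

theorem deBruijnReachable.dist_pos (h : deBruijnReachable x y) (hxy : x ≠ y) :
    0 < deBruijnDist x y := by
  refine Nat.pos_of_ne_zero fun dist_eq_zero => hxy ?_
  exact (dist_eq_zero ▸ h.overlap_dist).eq_of_zero

theorem deBruijnOverlap.trans_constant (hc : ∀ p q, c p = c q)
    (hxc : deBruijnOverlap (m + 1) x c) (hcy : deBruijnOverlap (n + 1) c y) :
    deBruijnOverlap (m + n + 1) x y := by
  intro i p hp
  let q : Fin D := ⟨i + n, by omega⟩
  let q' : Fin D := ⟨i + (n + 1), by omega⟩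
  calc
    y i = c q' := hcy i q' rfl
    _ = c q := hc q' q
    _ = x p := hxc q p (by simp only [q]; omega)

end

/-- **Constant nodes of a de Bruijn graph route no traffic.**
In `B(Δ, D)` with `Δ ≥ 2`, `D ≥ 1`, let `c` be a constant string
(`c p = h` for all `p`).  Then for all vertices `j ≠ c` and `l ≠ c` such that
`c` is reachable from `j` and `l` is reachable from `c`, we have
`dist(j, l) < dist(j, c) + dist(c, l)`: no shortest directed path from `j`
to `l` passes through `c` as an interior vertex. -/
theorem deBruijn_constant_not_interior (Δ D : ℕ) (hΔ : 2 ≤ Δ) (hD : 1 ≤ D)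
    (h : Fin Δ) (c : Fin D → Fin Δ) (hc : ∀ p, c p = h)
    (j l : Fin D → Fin Δ) (hj : j ≠ c) (hl : l ≠ c)
    (hjc : deBruijnReachable j c) (hcl : deBruijnReachable c l) :
    deBruijnDist j l < deBruijnDist j c + deBruijnDist c l := by
  obtain ⟨m, hm⟩ := Nat.exists_eq_add_one.mpr (hjc.dist_pos hj)
  obtain ⟨n, hn⟩ := Nat.exists_eq_add_one.mpr (hcl.dist_pos hl.symm)
  have overlap_jc : deBruijnOverlap (m + 1) j c := hm ▸ hjc.overlap_dist
  have overlap_cl : deBruijnOverlap (n + 1) c l := hn ▸ hcl.overlap_dist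
  have c_constant : ∀ p q, c p = c q := fun p q => (hc p).trans (hc q).symm
  calc
    deBruijnDist j l ≤ m + n + 1 :=
      deBruijnDist_le_of_overlap (overlap_jc.trans_constant c_constant overlap_cl)
    _ < deBruijnDist j c + deBruijnDist c l := by omega
end

section
/- In the de Bruijn digraph B(Δ, D), for any vertex i, the number of ordered pairs (j, l) of vertices with j ≠ i and l ≠ i such that i lies on some shortest directed path from j to l as an interior vertex (equivalently, dist(j, i) + dist(i, l) = dist(j, l) with both distances at least 1) is at most L_max, where L_max = ((D−1)(Δ^{D+2} − (Δ−1)²) − D·Δ^{D+1} + Δ²) / (Δ−1)². -/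
/-!
A walk of length `n` from `x` to `y` exists exactly when `y`, placed `n` positions to the right of
`x`, agrees with `x` wherever the two overlap. Hence at most `Δ ^ a` vertices have a walk of length
`a` to `i`, and at most `Δ ^ b` are reached by a walk of length `b` from `i`. If `i` is interior to
a shortest path, at distances `a` and `b` from its ends, then `a + b ≤ D`, so the load is at most
`∑_{a + b ≤ D} Δ ^ (a + b)` over `a, b ≥ 1`. For each of the `D - 1` splittings `a + b = D` the
pair `(r, r)`, with `r` the rotation of `i` by `a`, is counted although its distance is `0`; this
gives the remaining `-(D - 1)`.
-/

section Overlap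

variable {α : Type*} {D m n a b : ℕ} {x y z : Fin D → α}

/-- The strings `x` and `y` agree wherever they overlap when `y` is placed `n` positions to the
right of `x`. It characterises the pairs of vertices joined by a walk of length `n`, and is vacuous
for `n ≥ D`. -/
def OverlapAt (n : ℕ) (x y : Fin D → α) : Prop :=
  ∀ p q : Fin D, (p : ℕ) + n = q → y p = x q

namespace OverlapAt

lemma refl (x : Fin D → α) : OverlapAt 0 x x :=
  fun _ _ hpq => congrArg x (Fin.ext hpq)

lemma of_length_le (hn : D ≤ n) (x y : Fin D → α) : OverlapAt n x y :=
  fun p q hpq => by omega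

lemma trans (hxy : OverlapAt m x y) (hyz : OverlapAt n y z) : OverlapAt (m + n) x z := by
  intro p q hpq
  have hr : (p : ℕ) + n < D := by omega
  exact (hyz p ⟨p + n, hr⟩ rfl).trans (hxy ⟨p + n, hr⟩ q (by simp only; omega))

lemma comp_rev (h : OverlapAt n x y) : OverlapAt n (y ∘ Fin.rev) (x ∘ Fin.rev) :=
  fun p q hpq => (h q.rev p.rev (by simp only [Fin.val_rev]; omega)).symm

lemma ncard_left_le [Finite α] (ha : a ≤ D) (y : Fin D → α) :
    {x | OverlapAt a x y}.ncard ≤ Nat.card α ^ a := by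
  let firstSymbols (x : Fin D → α) : Fin a → α := x ∘ Fin.castLE ha
  have injOn_firstSymbols : Set.InjOn firstSymbols {x | OverlapAt a x y} := by
    intro x hx x' hx' hxx'
    funext q
    by_cases hq : (q : ℕ) < a
    · exact congrFun hxx' ⟨q, hq⟩
    · have hpq : (q : ℕ) - a + a = q := by omega
      let p : Fin D := ⟨q - a, by omega⟩
      exact (hx p q hpq).symm.trans (hx' p q hpq)
  calc {x | OverlapAt a x y}.ncard
      ≤ (Set.univ : Set (Fin a → α)).ncard :=
        Set.ncard_le_ncard_of_injOn firstSymbols (fun _ _ => Set.mem_univ _) injOn_firstSymbols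
    _ = Nat.card α ^ a := by rw [Set.ncard_univ, Nat.card_fun, Nat.card_fin]

lemma ncard_right_le [Finite α] (hb : b ≤ D) (x : Fin D → α) :
    {y | OverlapAt b x y}.ncard ≤ Nat.card α ^ b :=
  (Set.ncard_le_ncard_of_injOn (· ∘ Fin.rev) (fun _ h => h.comp_rev)
    Fin.rev_surjective.injective_comp_right.injOn).trans (ncard_left_le hb (x ∘ Fin.rev))

lemma exists_rotation (hab : a + b = D) (x : Fin D → α) :
    ∃ r, OverlapAt a r x ∧ OverlapAt b x r := by
  refine ⟨fun k => if hk : (k : ℕ) < a then x ⟨k + b, by omega⟩ else x ⟨k - a, by omega⟩,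
    fun p q hpq => ?_, fun p q hpq => ?_⟩
  · have hq : ¬ (q : ℕ) < a := by omega
    simp only [dif_neg hq, Nat.sub_eq_of_eq_add hpq.symm]
  · have hp : (p : ℕ) < a := by omega
    simp only [dif_pos hp, hpq]

end OverlapAt

/-- The pairs `(x, y)` of distinct strings such that `x` has a walk of length `a` to `i` and `i` has
a walk of length `b` to `y`, walks being encoded by `OverlapAt`. -/
def pairsVia (i : Fin D → α) (a b : ℕ) : Set ((Fin D → α) × (Fin D → α)) :=
  ({x | OverlapAt a x i} ×ˢ {y | OverlapAt b i y}) \ Set.diagonal _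

variable [Finite α]

lemma ncard_overlapAt_prod_le (hab : a + b ≤ D) (i : Fin D → α) :
    ({x | OverlapAt a x i} ×ˢ {y | OverlapAt b i y}).ncard ≤ Nat.card α ^ (a + b) := by
  rw [Set.ncard_prod, pow_add]
  exact Nat.mul_le_mul (OverlapAt.ncard_left_le (by omega) i)
    (OverlapAt.ncard_right_le (by omega) i)

lemma ncard_pairsVia_le (hab : a + b ≤ D) (i : Fin D → α) :
    (pairsVia i a b).ncard ≤ Nat.card α ^ (a + b) :=
  (Set.ncard_le_ncard Set.sdiff_subset).trans (ncard_overlapAt_prod_le hab i)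

lemma ncard_pairsVia_lt (hab : a + b = D) (i : Fin D → α) :
    (pairsVia i a b).ncard < Nat.card α ^ (a + b) := by
  obtain ⟨r, hri, hir⟩ := OverlapAt.exists_rotation hab i
  have hssub : pairsVia i a b ⊂ {x | OverlapAt a x i} ×ˢ {y | OverlapAt b i y} :=
    (Set.ssubset_iff_of_subset Set.sdiff_subset).2 ⟨(r, r), ⟨hri, hir⟩, fun h => h.2 rfl⟩
  exact (Set.ncard_lt_ncard hssub).trans_le (ncard_overlapAt_prod_le hab.le i)

open Finset in
lemma sum_antidiagonal_ncard_pairsVia_le (hn : n + 2 ≤ D) (i : Fin D → α) :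
    ∑ q ∈ antidiagonal n, (pairsVia i (q.1 + 1) (q.2 + 1)).ncard
      ≤ (n + 1) * Nat.card α ^ (n + 2) := by
  rw [← Nat.card_antidiagonal n, ← smul_eq_mul]
  refine sum_le_card_nsmul _ _ _ fun q hq => ?_
  have hlen : q.1 + 1 + (q.2 + 1) = n + 2 := by rw [← mem_antidiagonal.1 hq]; ring
  exact hlen ▸ ncard_pairsVia_le (hlen.trans_le hn) i

open Finset in
lemma sum_antidiagonal_ncard_pairsVia_add_le (hn : n + 2 = D) (i : Fin D → α) :
    ∑ q ∈ antidiagonal n, (pairsVia i (q.1 + 1) (q.2 + 1)).ncard + (n + 1)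
      ≤ (n + 1) * Nat.card α ^ (n + 2) := by
  rw [← Nat.card_antidiagonal n, card_eq_sum_ones, ← sum_add_distrib, ← card_eq_sum_ones,
    ← smul_eq_mul]
  refine sum_le_card_nsmul _ _ _ fun q hq => ?_
  have hlen : q.1 + 1 + (q.2 + 1) = n + 2 := by rw [← mem_antidiagonal.1 hq]; ring
  exact hlen ▸ ncard_pairsVia_lt (hlen.trans hn) i

open Finset in
lemma sum_range_ncard_pairsVia_add_le (i : Fin D → α) :
    ∑ n ∈ range (D - 1), ∑ q ∈ antidiagonal n, (pairsVia i (q.1 + 1) (q.2 + 1)).ncard + (D - 1)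
      ≤ ∑ n ∈ range (D - 1), (n + 1) * Nat.card α ^ (n + 2) := by
  obtain hD | ⟨n, hn⟩ : D - 1 = 0 ∨ ∃ n, D - 1 = n + 1 := by cases D - 1 <;> simp
  · simp [hD]
  · rw [hn, sum_range_succ, sum_range_succ, add_assoc]
    refine add_le_add (sum_le_sum fun k hk => ?_)
      (sum_antidiagonal_ncard_pairsVia_add_le (by omega) i)
    exact sum_antidiagonal_ncard_pairsVia_le (by have := mem_range.1 hk; omega) i

end Overlap

section Distance

variable {Δ D n : ℕ}

lemma deBruijnAdj.overlapAt {x y : Fin D → Fin Δ} (h : deBruijnAdj x y) : OverlapAt 1 x y :=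
  fun p q hpq => (h p (by omega)).trans (congrArg x (Fin.ext hpq))

lemma deBruijnWalk.overlapAt {f : ℕ → Fin D → Fin Δ} (hf : deBruijnWalk n f) :
    OverlapAt n (f 0) (f n) := by
  induction n with
  | zero => exact OverlapAt.refl _
  | succ n ih =>
    exact (ih fun k hk => hf k (by omega)).trans (hf n (by omega)).overlapAt

lemma OverlapAt.exists_deBruijnWalk {x y : Fin D → Fin Δ} (h : OverlapAt n x y) :
    ∃ f : ℕ → Fin D → Fin Δ, f 0 = x ∧ f n = y ∧ deBruijnWalk n f := by
  -- The windows of length `D` of a word that starts with `x` and has `y` at position `n`; the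
  -- reduction modulo `D` only keeps the index in range past the end of `y`.
  refine ⟨fun m k => if hk : (k : ℕ) + m < D then x ⟨k + m, hk⟩
    else y ⟨(k + m - n) % D, Nat.mod_lt _ k.pos⟩, ?_, ?_, ?_⟩
  · funext k
    simp
  · funext k
    by_cases hk : (k : ℕ) + n < D
    · simpa [hk] using (h k ⟨k + n, hk⟩ rfl).symm
    · simp [hk, Nat.mod_eq_of_lt k.isLt]
  · intro m _ k hk
    simp only [show k + (m + 1) = k + 1 + m by omega]

lemma deBruijnDist_eq_sInf_overlapAt (x y : Fin D → Fin Δ) :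
    deBruijnDist x y = sInf {n | OverlapAt n x y} := by
  unfold deBruijnDist
  congr 1
  ext n
  exact ⟨fun ⟨_, h0, hn, hf⟩ => h0 ▸ hn ▸ hf.overlapAt, OverlapAt.exists_deBruijnWalk⟩

lemma OverlapAt.deBruijnDist_le {x y : Fin D → Fin Δ} (h : OverlapAt n x y) :
    deBruijnDist x y ≤ n :=
  (deBruijnDist_eq_sInf_overlapAt x y).trans_le (Nat.sInf_le h)

lemma overlapAt_deBruijnDist (x y : Fin D → Fin Δ) : OverlapAt (deBruijnDist x y) x y := by
  have hne : {n | OverlapAt n x y}.Nonempty := ⟨D, OverlapAt.of_length_le le_rfl x y⟩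
  exact deBruijnDist_eq_sInf_overlapAt x y ▸ Nat.sInf_mem hne

lemma deBruijnDist_le_length (x y : Fin D → Fin Δ) : deBruijnDist x y ≤ D :=
  (OverlapAt.of_length_le le_rfl x y).deBruijnDist_le

lemma deBruijnDist_self (x : Fin D → Fin Δ) : deBruijnDist x x = 0 :=
  Nat.le_zero.1 (OverlapAt.refl x).deBruijnDist_le

/-- The ordered pairs of vertices that have a shortest path with `i` in its interior; the
cardinality of this set is the routing load of `i`. -/
def pairsRoutedThrough (i : Fin D → Fin Δ) : Set ((Fin D → Fin Δ) × (Fin D → Fin Δ)) :=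
  {p | p.1 ≠ i ∧ p.2 ≠ i ∧ 1 ≤ deBruijnDist p.1 i ∧ 1 ≤ deBruijnDist i p.2 ∧
    deBruijnDist p.1 i + deBruijnDist i p.2 = deBruijnDist p.1 p.2}

open Finset in
lemma pairsRoutedThrough_subset_biUnion_pairsVia (i : Fin D → Fin Δ) :
    pairsRoutedThrough i ⊆ ⋃ n ∈ range (D - 1), ⋃ q ∈ antidiagonal n,
      pairsVia i (q.1 + 1) (q.2 + 1) := by
  rintro ⟨x, y⟩ ⟨-, -, hxi, hiy, hadd⟩
  simp only at hxi hiy hadd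
  obtain ⟨a, ha⟩ := Nat.exists_eq_add_of_le' hxi
  obtain ⟨b, hb⟩ := Nat.exists_eq_add_of_le' hiy
  have hlen : a + b < D - 1 := by have := deBruijnDist_le_length x y; omega
  have hne : x ≠ y := by
    rintro rfl
    rw [deBruijnDist_self] at hadd
    omega
  refine Set.mem_biUnion (mem_range.2 hlen)
    (Set.mem_biUnion (mem_antidiagonal.2 (rfl : (a, b).1 + (a, b).2 = a + b)) ?_)
  exact ⟨⟨ha ▸ overlapAt_deBruijnDist x i, hb ▸ overlapAt_deBruijnDist i y⟩, hne⟩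

open Finset in
theorem ncard_pairsRoutedThrough_add_le (i : Fin D → Fin Δ) :
    (pairsRoutedThrough i).ncard + (D - 1) ≤ ∑ n ∈ range (D - 1), (n + 1) * Δ ^ (n + 2) := by
  have hunion : (pairsRoutedThrough i).ncard
      ≤ ∑ n ∈ range (D - 1), ∑ q ∈ antidiagonal n, (pairsVia i (q.1 + 1) (q.2 + 1)).ncard :=
    (Set.ncard_le_ncard (pairsRoutedThrough_subset_biUnion_pairsVia i)).trans <|
      (set_ncard_biUnion_le _ _).trans (sum_le_sum fun _ _ => set_ncard_biUnion_le _ _)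
  calc (pairsRoutedThrough i).ncard + (D - 1)
    _ ≤ _ := Nat.add_le_add_right hunion _
    _ ≤ ∑ n ∈ range (D - 1), (n + 1) * Nat.card (Fin Δ) ^ (n + 2) :=
      sum_range_ncard_pairsVia_add_le i
    _ = ∑ n ∈ range (D - 1), (n + 1) * Δ ^ (n + 2) := by rw [Nat.card_fin]

end Distance

lemma sum_range_succ_mul_pow_add_mul_sub_one_sq {R : Type*} [CommRing R] (x : R) (m k : ℕ) :
    (∑ n ∈ Finset.range m, ((n : R) + 1) * x ^ (n + k)) * (x - 1) ^ 2
      = m * x ^ (m + k + 1) - (m + 1) * x ^ (m + k) + x ^ k := by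
  induction m with
  | zero => simp
  | succ m ih =>
    rw [Finset.sum_range_succ, add_mul, ih]
    push_cast
    ring

/-- **Upper bound on the routing load of a de Bruijn node.**
In `B(Δ, D)` with `Δ ≥ 2`, `D ≥ 1`, for any vertex `i`, the number of ordered
pairs `(j, l)` with `j ≠ i`, `l ≠ i` such that `i` is an interior vertex of
some shortest directed path from `j` to `l` (i.e.
`dist(j, i) + dist(i, l) = dist(j, l)` with both distances at least `1`) is at
most `L_max = ((D−1)(Δ^{D+2} − (Δ−1)²) − D·Δ^{D+1} + Δ²) / (Δ−1)²`. -/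
theorem deBruijn_routing_load_upper_bound (Δ D : ℕ) (hΔ : 2 ≤ Δ) (hD : 1 ≤ D)
    (i : Fin D → Fin Δ) :
    (Nat.card {p : (Fin D → Fin Δ) × (Fin D → Fin Δ) //
        p.1 ≠ i ∧ p.2 ≠ i ∧ 1 ≤ deBruijnDist p.1 i ∧ 1 ≤ deBruijnDist i p.2 ∧
        deBruijnDist p.1 i + deBruijnDist i p.2 = deBruijnDist p.1 p.2} : ℝ)
      ≤ (((D : ℝ) - 1) * ((Δ : ℝ) ^ (D + 2) - ((Δ : ℝ) - 1) ^ 2)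
          - (D : ℝ) * (Δ : ℝ) ^ (D + 1) + (Δ : ℝ) ^ 2) / ((Δ : ℝ) - 1) ^ 2 := by
  obtain ⟨m, rfl⟩ := Nat.exists_eq_add_of_le' hD
  have hpos : (0 : ℝ) < (Δ - 1) ^ 2 := pow_pos (sub_pos.2 (by exact_mod_cast hΔ)) 2
  rw [le_div_iff₀ hpos]
  change ((pairsRoutedThrough i).ncard : ℝ) * (Δ - 1) ^ 2 ≤ _
  have hbound : ((pairsRoutedThrough i).ncard : ℝ) + m
      ≤ ∑ n ∈ Finset.range m, ((n : ℝ) + 1) * Δ ^ (n + 2) := by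
    exact_mod_cast ncard_pairsRoutedThrough_add_le i
  calc ((pairsRoutedThrough i).ncard : ℝ) * (Δ - 1) ^ 2
    _ ≤ (∑ n ∈ Finset.range m, ((n : ℝ) + 1) * Δ ^ (n + 2) - m) * (Δ - 1) ^ 2 :=
      mul_le_mul_of_nonneg_right (le_sub_iff_add_le.2 hbound) hpos.le
    _ = m * (Δ : ℝ) ^ (m + 2 + 1) - (m + 1) * (Δ : ℝ) ^ (m + 2) + (Δ : ℝ) ^ 2
          - m * ((Δ : ℝ) - 1) ^ 2 := by
      rw [sub_mul, sum_range_succ_mul_pow_add_mul_sub_one_sq]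
    _ = _ := by
      push_cast
      ring
end

section
/- Let G be a directed graph on a vertex set of cardinality N = Δ^D (integers Δ ≥ 2, D ≥ 1) in which every vertex has out-degree at most Δ, and let i be a vertex from which every vertex of G is reachable. Then the sum over all vertices j of the directed distance dist(i, j) is at least D·Δ^D + D/(Δ−1) − Δ(Δ^D − 1)/(Δ−1)²; equivalently, (Δ−1)² · Σ_j dist(i, j) ≥ (Δ−1)²·D·Δ^D + D·(Δ−1) − Δ·(Δ^D − 1). -/
/-- `f` is a directed walk of length `n` for the relation `adj`. -/
def relWalk {V : Type*} (adj : V → V → Prop) (n : ℕ) (f : ℕ → V) : Prop :=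
  ∀ k < n, adj (f k) (f (k + 1))

/-- Directed graph distance for the relation `adj`: the length of a shortest
directed walk from `x` to `y` (`0` from a vertex to itself). -/
noncomputable def relDist {V : Type*} (adj : V → V → Prop) (x y : V) : ℕ :=
  sInf {n : ℕ | ∃ f : ℕ → V, f 0 = x ∧ f n = y ∧ relWalk adj n f}

/-!
A vertex has at most `Δ ^ m` endpoints of walks of length `m`, so at most `∑ m ≤ k, Δ ^ m` vertices
lie at distance at most `k` from it. Writing each distance as the number of `k` below it and
exchanging the order of summation, the sum of the distances from `i` to the vertices of a finite
set `S` is at least the sum over `k < D` of the number of vertices of `S` farther than `k`, hence at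
least `∑ k < D, (#S - ∑ m ≤ k, Δ ^ m)`. Evaluating the geometric sums gives the bound.
-/

open Finset

section Counting

variable {α ι : Type*}

lemma encard_biUnion_le_encard_mul {t : Set ι} {s : ι → Set α} {c : ℕ∞}
    (hs : ∀ i ∈ t, (s i).encard ≤ c) : (⋃ i ∈ t, s i).encard ≤ t.encard * c := by
  rcases t.finite_or_infinite with ht | ht
  · lift t to Finset ι using ht
    calc (⋃ i ∈ t, s i).encard
        ≤ ∑ i ∈ t, (s i).encard := t.set_encard_biUnion_le s
      _ ≤ #t • c := sum_le_card_nsmul t _ c hs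
      _ = (t : Set ι).encard * c := by rw [nsmul_eq_mul, Set.encard_coe_eq_coe_finsetCard]
  · rcases eq_or_ne c 0 with rfl | hc
    · simpa using hs
    · simp [ht.encard_eq, ENat.top_mul hc]

lemma sum_range_card_filter_lt (s : Finset α) (f : α → ℕ) (n : ℕ) :
    ∑ k ∈ range n, #{a ∈ s | k < f a} = ∑ a ∈ s, min n (f a) := by
  have filter_range (m : ℕ) : {k ∈ range n | k < m} = range (min n m) := by
    ext k
    simp
  calc ∑ k ∈ range n, #{a ∈ s | k < f a}
      = ∑ a ∈ s, #{k ∈ range n | k < f a} :=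
        sum_card_bipartiteAbove_eq_sum_card_bipartiteBelow fun k a ↦ k < f a
    _ = ∑ a ∈ s, min n (f a) := by simp only [filter_range, card_range]

lemma sub_one_sq_mul_sum_sub_geom_sum {R : Type*} [CommRing R] (x N : R) (n : ℕ) :
    (x - 1) ^ 2 * ∑ k ∈ range n, (N - ∑ m ∈ range (k + 1), x ^ m)
      = (x - 1) ^ 2 * n * N + n * (x - 1) - x * (x ^ n - 1) := by
  induction n with
  | zero => simp
  | succ n ih =>
    rw [sum_range_succ, mul_add, ih]
    push_cast
    linear_combination (1 - x) * geom_sum_mul x (n + 1)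

end Counting

section Walks

variable {V : Type*} {adj : V → V → Prop} {i j : V}

/-- The vertices at the end of some walk of length exactly `n` from `i`. This contains the sphere of
radius `n` around `i`, but also vertices closer to `i`; it is used to count the former. -/
def walkEndpoints (adj : V → V → Prop) (i : V) (n : ℕ) : Set V :=
  {j | ∃ f : ℕ → V, f 0 = i ∧ f n = j ∧ relWalk adj n f}

lemma walkEndpoints_zero : walkEndpoints adj i 0 = {i} := by
  ext j
  constructor
  · rintro ⟨f, rfl, rfl, -⟩
    rfl
  · rintro rfl
    exact ⟨fun _ ↦ j, rfl, rfl, fun _ hk ↦ absurd hk (Nat.not_lt_zero _)⟩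

lemma relWalk.update_succ {n : ℕ} {f : ℕ → V} (hf : relWalk adj n f) {w : V} (hw : adj (f n) w) :
    relWalk adj (n + 1) (Function.update f (n + 1) w) := by
  intro k hk
  rcases Nat.lt_succ_iff_lt_or_eq.mp hk with hkn | rfl
  · simpa [hk.ne, hkn.ne] using hf k hkn
  · simpa using hw

lemma walkEndpoints_succ (n : ℕ) :
    walkEndpoints adj i (n + 1) = ⋃ v ∈ walkEndpoints adj i n, {w | adj v w} := by
  ext w
  simp only [Set.mem_iUnion₂, Set.mem_ofPred_eq, exists_prop]
  constructor
  · rintro ⟨f, rfl, rfl, hf⟩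
    exact ⟨f n, ⟨f, rfl, rfl, fun k hk ↦ hf k (hk.trans n.lt_succ_self)⟩, hf n n.lt_succ_self⟩
  · rintro ⟨_, ⟨f, rfl, rfl, hf⟩, hw⟩
    exact ⟨Function.update f (n + 1) w, by simp, by simp, hf.update_succ hw⟩

lemma exists_mem_walkEndpoints (h : Relation.ReflTransGen adj i j) :
    ∃ n, j ∈ walkEndpoints adj i n := by
  induction h with
  | refl => exact ⟨0, by simp [walkEndpoints_zero]⟩
  | tail _ hvw ih =>
    obtain ⟨n, hn⟩ := ih
    exact ⟨n + 1, walkEndpoints_succ (adj := adj) n ▸ Set.mem_biUnion hn hvw⟩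

lemma mem_walkEndpoints_relDist (h : Relation.ReflTransGen adj i j) :
    j ∈ walkEndpoints adj i (relDist adj i j) :=
  Nat.sInf_mem (exists_mem_walkEndpoints h)

end Walks

section BoundedOutDegree

variable {V : Type*} {adj : V → V → Prop} {Δ : ℕ}

lemma encard_walkEndpoints_le (hdeg : ∀ v, {w | adj v w}.encard ≤ Δ) (i : V) (n : ℕ) :
    (walkEndpoints adj i n).encard ≤ Δ ^ n := by
  induction n with
  | zero => simp [walkEndpoints_zero]
  | succ n ih =>
    calc (walkEndpoints adj i (n + 1)).encard
        ≤ (walkEndpoints adj i n).encard * Δ := by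
          rw [walkEndpoints_succ]
          exact encard_biUnion_le_encard_mul fun v _ ↦ hdeg v
      _ ≤ Δ ^ n * Δ := by gcongr
      _ = Δ ^ (n + 1) := (pow_succ _ _).symm

lemma encard_relDist_le_le_geom_sum (hdeg : ∀ v, {w | adj v w}.encard ≤ Δ) (i : V) (k : ℕ) :
    {j | Relation.ReflTransGen adj i j ∧ relDist adj i j ≤ k}.encard
      ≤ ∑ m ∈ range (k + 1), (Δ : ℕ∞) ^ m := by
  have ball_subset : {j | Relation.ReflTransGen adj i j ∧ relDist adj i j ≤ k}
      ⊆ ⋃ m ∈ range (k + 1), walkEndpoints adj i m := fun j ⟨hj, hjk⟩ ↦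
    Set.mem_biUnion (mem_range_succ_iff.mpr hjk) (mem_walkEndpoints_relDist hj)
  calc _ ≤ (⋃ m ∈ range (k + 1), walkEndpoints adj i m).encard := Set.encard_le_encard ball_subset
    _ ≤ ∑ m ∈ range (k + 1), (walkEndpoints adj i m).encard := set_encard_biUnion_le _ _
    _ ≤ ∑ m ∈ range (k + 1), (Δ : ℕ∞) ^ m :=
      sum_le_sum fun m _ ↦ encard_walkEndpoints_le hdeg i m

lemma card_le_card_lt_relDist_add_geom_sum (hdeg : ∀ v, {w | adj v w}.encard ≤ Δ) {i : V}
    {S : Finset V} (hreach : ∀ j ∈ S, Relation.ReflTransGen adj i j) (k : ℕ) :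
    #S ≤ #{j ∈ S | k < relDist adj i j} + ∑ m ∈ range (k + 1), Δ ^ m := by
  have near_le : #{j ∈ S | ¬ k < relDist adj i j} ≤ ∑ m ∈ range (k + 1), Δ ^ m := by
    have near_subset : (({j ∈ S | ¬ k < relDist adj i j} : Finset V) : Set V)
        ⊆ {j | Relation.ReflTransGen adj i j ∧ relDist adj i j ≤ k} := fun j hj ↦
      have ⟨hjS, hjk⟩ := mem_filter.mp hj
      ⟨hreach j hjS, not_lt.mp hjk⟩
    have h := (Set.encard_le_encard near_subset).trans (encard_relDist_le_le_geom_sum hdeg i k)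
    rw [Set.encard_coe_eq_coe_finsetCard] at h
    exact_mod_cast h
  rw [← card_filter_add_card_filter_not (s := S) fun j ↦ k < relDist adj i j]
  gcongr

lemma sum_card_sub_geom_sum_le_sum_relDist (hdeg : ∀ v, {w | adj v w}.encard ≤ Δ) {i : V}
    {S : Finset V} (hreach : ∀ j ∈ S, Relation.ReflTransGen adj i j) (D : ℕ) :
    ∑ k ∈ range D, ((#S : ℤ) - ∑ m ∈ range (k + 1), (Δ : ℤ) ^ m)
      ≤ ∑ j ∈ S, (relDist adj i j : ℤ) := by
  calc ∑ k ∈ range D, ((#S : ℤ) - ∑ m ∈ range (k + 1), (Δ : ℤ) ^ m)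
      ≤ ∑ k ∈ range D, (#{j ∈ S | k < relDist adj i j} : ℤ) :=
        sum_le_sum fun k _ ↦ sub_le_iff_le_add.mpr <|
          mod_cast card_le_card_lt_relDist_add_geom_sum hdeg hreach k
    _ = ∑ j ∈ S, ((min D (relDist adj i j) : ℕ) : ℤ) :=
        mod_cast sum_range_card_filter_lt S (relDist adj i) D
    _ ≤ ∑ j ∈ S, (relDist adj i j : ℤ) :=
        sum_le_sum fun j _ ↦ mod_cast min_le_right _ _

theorem sum_dist_lower_bound_general (hdeg : ∀ v, {w | adj v w}.encard ≤ Δ) {i : V}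
    {S : Finset V} (hreach : ∀ j ∈ S, Relation.ReflTransGen adj i j) (D : ℕ) :
    ((Δ : ℤ) - 1) ^ 2 * ∑ j ∈ S, (relDist adj i j : ℤ)
      ≥ ((Δ : ℤ) - 1) ^ 2 * D * #S + D * ((Δ : ℤ) - 1) - Δ * ((Δ : ℤ) ^ D - 1) := by
  rw [← sub_one_sq_mul_sum_sub_geom_sum]
  exact mul_le_mul_of_nonneg_left (sum_card_sub_geom_sum_le_sum_relDist hdeg hreach D)
    (sq_nonneg _)

end BoundedOutDegree

/-- **Lower bound on the sum of distances in a bounded out-degree digraph.**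
Let `G` be a digraph on `N = Δ^D` vertices (`Δ ≥ 2`, `D ≥ 1`) in which every
vertex has out-degree at most `Δ`, and let `i` be a vertex from which every
vertex is reachable.  Then
`(Δ−1)² · Σ_j dist(i, j) ≥ (Δ−1)²·D·Δ^D + D·(Δ−1) − Δ·(Δ^D − 1)`,
i.e. `Σ_j dist(i, j) ≥ D·Δ^D + D/(Δ−1) − Δ(Δ^D − 1)/(Δ−1)²`. -/
theorem sum_dist_lower_bound {V : Type*} [Fintype V] (adj : V → V → Prop)
    (Δ D : ℕ) (hΔ : 2 ≤ Δ) (hD : 1 ≤ D) (hcard : Fintype.card V = Δ ^ D)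
    (hdeg : ∀ v : V, Nat.card {w : V // adj v w} ≤ Δ)
    (i : V) (hreach : ∀ j : V, Relation.ReflTransGen adj i j) :
    ((Δ : ℤ) - 1) ^ 2 * ∑ j : V, (relDist adj i j : ℤ)
      ≥ ((Δ : ℤ) - 1) ^ 2 * (D : ℤ) * (Δ : ℤ) ^ D + (D : ℤ) * ((Δ : ℤ) - 1)
        - (Δ : ℤ) * ((Δ : ℤ) ^ D - 1) := by
  have hdeg_encard (v : V) : {w | adj v w}.encard ≤ Δ :=
    (Set.toFinite {w | adj v w}).cast_ncard_eq ▸ Nat.cast_le.mpr (hdeg v)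
  simpa [hcard] using sum_dist_lower_bound_general hdeg_encard (fun j _ ↦ hreach j) (S := univ) D
end

section
/- Let N ≥ 3 be an odd integer, and consider the cycle (ring) on vertex set ZMod N in which j is adjacent to j+1 and j−1. Every ordered pair (j, l) of distinct vertices has a unique shortest path. For any fixed vertex i, the number of ordered pairs (j, l) with j ≠ l, j ≠ i, l ≠ i, such that i is an interior vertex of the unique shortest path from j to l, equals (N−1)(N−3)/4. -/
/-- `f` is a walk of length `n` in the cycle on `ZMod N` (each step moves to
a neighbor `+1` or `−1`). -/
def cycleWalk (N : ℕ) (n : ℕ) (f : ℕ → ZMod N) : Prop :=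
  ∀ k < n, f (k + 1) = f k + 1 ∨ f (k + 1) = f k - 1

/-- Graph distance in the cycle on `ZMod N`: the length of a shortest walk. -/
noncomputable def cycleDist (N : ℕ) (j l : ZMod N) : ℕ :=
  sInf {n : ℕ | ∃ f : ℕ → ZMod N, f 0 = j ∧ f n = l ∧ cycleWalk N n f}

/-!
A vertex `i ≠ j, l` is interior to a shortest walk from `j` to `l` iff
`d(j, i) + d(i, l) = d(j, l)`, and `d(j, l)` is the absolute value of the representative of
`l - j` nearest to `0`. If `N = 2m + 1`, that representative is the only integer of absolute value
at most `m` in its residue class, so equality in the triangle inequality forces the representatives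
`x` of `i - j` and `y` of `l - i` to have the same sign and `x + y` to represent `l - j`. A point of
a shortest walk is therefore determined by its distance from the start, and the pairs `(j, l)` to
be counted correspond to the pairs of nonzero `x, y` of the same sign with `|x + y| ≤ m`, of which
there are `m (m - 1)`.
-/

section Walks

variable {N : ℕ}

/-- `f` is a shortest walk from `j` to `l` in the cycle on `ZMod N`. Only the values of `f` up to
`cycleDist N j l` matter. -/
def IsShortestWalk (N : ℕ) (j l : ZMod N) (f : ℕ → ZMod N) : Prop :=
  f 0 = j ∧ f (cycleDist N j l) = l ∧ cycleWalk N (cycleDist N j l) f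

/-- `i` is an interior vertex of some shortest walk from `j` to `l`: it is visited strictly between
the first and the last step. -/
def IsInteriorVertex (N : ℕ) (i j l : ZMod N) : Prop :=
  ∃ f, IsShortestWalk N j l f ∧ ∃ t, 0 < t ∧ t < cycleDist N j l ∧ f t = i

lemma cycleWalk.cycleDist_le {n s t : ℕ} {f : ℕ → ZMod N} (hf : cycleWalk N n f) (hst : s ≤ t)
    (htn : t ≤ n) : cycleDist N (f s) (f t) ≤ t - s :=
  Nat.sInf_le ⟨fun k ↦ f (s + k), rfl, by simp only [Nat.add_sub_cancel' hst],
    fun k hk ↦ hf (s + k) (by omega)⟩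

lemma cycleWalk.append {m n : ℕ} {f g : ℕ → ZMod N} (hf : cycleWalk N m f)
    (hg : cycleWalk N n g) (hfg : f m = g 0) :
    cycleWalk N (m + n) fun k ↦ if k ≤ m then f k else g (k - m) := by
  intro k hk
  rcases lt_trichotomy k m with hkm | rfl | hmk
  · simpa only [hkm.le, Nat.succ_le_of_lt hkm, if_true] using hf k hkm
  · simpa [hfg] using hg 0 (by omega)
  · simpa only [hmk.not_ge, (hmk.trans k.lt_succ_self).not_ge, if_false,
      Nat.sub_add_comm hmk.le] using hg (k - m) (by omega)

lemma cycleWalk_add_sign_mul (j : ZMod N) (v : ℤ) :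
    cycleWalk N v.natAbs fun t ↦ j + ((v.sign * t : ℤ) : ZMod N) := by
  intro k hk
  rcases lt_trichotomy v 0 with hv | rfl | hv
  · right
    simp only [Int.sign_eq_neg_one_of_neg hv]
    push_cast
    ring
  · simp at hk
  · left
    simp only [Int.sign_eq_one_of_pos hv]
    push_cast
    ring

lemma exists_cycleWalk_natAbs_valMinAbs (j l : ZMod N) :
    ∃ f : ℕ → ZMod N, f 0 = j ∧ f (l - j).valMinAbs.natAbs = l ∧
      cycleWalk N (l - j).valMinAbs.natAbs f :=
  ⟨_, by simp, by simp only [Int.sign_mul_natAbs, ZMod.coe_valMinAbs, add_sub_cancel],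
    cycleWalk_add_sign_mul j (l - j).valMinAbs⟩

lemma natAbs_valMinAbs_intCast_le (v : ℤ) : (v : ZMod N).valMinAbs.natAbs ≤ v.natAbs := by
  rcases eq_zero_or_neZero N with rfl | _
  · rfl
  · exact ZMod.natAbs_min_of_le_div_two N _ v (ZMod.coe_valMinAbs _) (ZMod.natAbs_valMinAbs_le _)

lemma cycleWalk.natAbs_valMinAbs_sub_le {n : ℕ} {f : ℕ → ZMod N} (hf : cycleWalk N n f) :
    (f n - f 0).valMinAbs.natAbs ≤ n := by
  suffices ∃ v : ℤ, v.natAbs ≤ n ∧ f n - f 0 = v by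
    obtain ⟨v, hvn, hv⟩ := this
    exact hv ▸ (natAbs_valMinAbs_intCast_le v).trans hvn
  induction n with
  | zero => exact ⟨0, by simp⟩
  | succ n ih =>
    obtain ⟨v, hvn, hv⟩ := ih fun k hk ↦ hf k (by omega)
    rcases hf n n.lt_succ_self with hstep | hstep
    · exact ⟨v + 1, by omega, by rw [hstep, Int.cast_add, ← hv, Int.cast_one]; ring⟩
    · exact ⟨v - 1, by omega, by rw [hstep, Int.cast_sub, ← hv, Int.cast_one]; ring⟩

lemma cycleDist_eq_natAbs_valMinAbs (j l : ZMod N) :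
    cycleDist N j l = (l - j).valMinAbs.natAbs := by
  refine le_antisymm (Nat.sInf_le (exists_cycleWalk_natAbs_valMinAbs j l))
    (le_csInf ⟨_, exists_cycleWalk_natAbs_valMinAbs j l⟩ ?_)
  rintro n ⟨f, rfl, rfl, hf⟩
  exact hf.natAbs_valMinAbs_sub_le

lemma exists_isShortestWalk (j l : ZMod N) : ∃ f, IsShortestWalk N j l f := by
  simpa only [IsShortestWalk, cycleDist_eq_natAbs_valMinAbs] using
    exists_cycleWalk_natAbs_valMinAbs j l

lemma cycleDist_eq_zero_iff {j l : ZMod N} : cycleDist N j l = 0 ↔ j = l := by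
  rw [cycleDist_eq_natAbs_valMinAbs, Int.natAbs_eq_zero, ZMod.valMinAbs_eq_zero, sub_eq_zero,
    eq_comm]

lemma cycleDist_triangle (j i l : ZMod N) :
    cycleDist N j l ≤ cycleDist N j i + cycleDist N i l := by
  simp only [cycleDist_eq_natAbs_valMinAbs]
  calc (l - j).valMinAbs.natAbs
      = ((i - j) + (l - i)).valMinAbs.natAbs := by congr 2; ring
    _ ≤ ((i - j).valMinAbs + (l - i).valMinAbs).natAbs := ZMod.natAbs_valMinAbs_add_le _ _
    _ ≤ (i - j).valMinAbs.natAbs + (l - i).valMinAbs.natAbs := Int.natAbs_add_le _ _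

lemma IsShortestWalk.cycleDist_apply {j l : ZMod N} {f : ℕ → ZMod N} (hf : IsShortestWalk N j l f)
    {t : ℕ} (ht : t ≤ cycleDist N j l) :
    cycleDist N j (f t) = t ∧ cycleDist N (f t) l = cycleDist N j l - t := by
  obtain ⟨hstart, hend, hwalk⟩ := hf
  have hle_left : cycleDist N j (f t) ≤ t := hstart ▸ hwalk.cycleDist_le t.zero_le ht
  have hle_right : cycleDist N (f t) l ≤ cycleDist N j l - t := by
    simpa only [hend] using hwalk.cycleDist_le ht le_rfl
  have htriangle := cycleDist_triangle j (f t) l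
  omega

lemma exists_isShortestWalk_apply_cycleDist_eq {i j l : ZMod N}
    (h : cycleDist N j i + cycleDist N i l = cycleDist N j l) :
    ∃ f, IsShortestWalk N j l f ∧ f (cycleDist N j i) = i := by
  obtain ⟨f, hf_start, hf_end, hf⟩ := exists_isShortestWalk j i
  obtain ⟨g, hg_start, hg_end, hg⟩ := exists_isShortestWalk i l
  have hjoin : f (cycleDist N j i) = g 0 := hf_end.trans hg_start.symm
  refine ⟨_, ⟨?_, ?_, h ▸ hf.append hg hjoin⟩, ?_⟩
  · simpa using hf_start
  · rw [← h]
    split_ifs with hle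
    · have hzero : cycleDist N i l = 0 := by omega
      rw [hzero, add_zero, hf_end, cycleDist_eq_zero_iff.mp hzero]
    · rw [Nat.add_sub_cancel_left, hg_end]
  · simpa using hf_end

lemma isInteriorVertex_iff {i j l : ZMod N} :
    IsInteriorVertex N i j l ↔
      j ≠ i ∧ i ≠ l ∧ cycleDist N j i + cycleDist N i l = cycleDist N j l := by
  simp only [ne_eq, ← cycleDist_eq_zero_iff]
  constructor
  · rintro ⟨f, hf, t, ht0, htd, rfl⟩
    have := hf.cycleDist_apply htd.le
    omega
  · rintro ⟨hji, hil, hadd⟩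
    obtain ⟨f, hf, hfi⟩ := exists_isShortestWalk_apply_cycleDist_eq hadd
    exact ⟨f, hf, _, by omega, by omega, hfi⟩

lemma IsInteriorVertex.ne {i j l : ZMod N} (h : IsInteriorVertex N i j l) : j ≠ l := by
  obtain ⟨_, _, t, _, ht, _⟩ := h
  exact fun hjl ↦ absurd ht (by simp [cycleDist_eq_zero_iff.mpr hjl])

end Walks

section OddCycle

variable {N : ℕ}

lemma valMinAbs_intCast_of_odd (hN : Odd N) {x : ℤ} (hx : x.natAbs ≤ N / 2) :
    (x : ZMod N).valMinAbs = x := by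
  have : NeZero N := ⟨hN.pos.ne'⟩
  obtain ⟨m, rfl⟩ := hN
  refine (ZMod.valMinAbs_spec _ x).mpr ⟨rfl, ?_⟩
  rw [Set.mem_Ioc]
  omega

lemma valMinAbs_add_of_odd (hN : Odd N) {a b : ZMod N}
    (h : (a.valMinAbs + b.valMinAbs).natAbs ≤ N / 2) :
    (a + b).valMinAbs = a.valMinAbs + b.valMinAbs := by
  rw [← valMinAbs_intCast_of_odd hN h, Int.cast_add, ZMod.coe_valMinAbs, ZMod.coe_valMinAbs]

lemma natAbs_valMinAbs_add_eq_iff_of_odd (hN : Odd N) {a b : ZMod N} :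
    a.valMinAbs.natAbs + b.valMinAbs.natAbs = (a + b).valMinAbs.natAbs ↔
      a.valMinAbs.natAbs + b.valMinAbs.natAbs = (a.valMinAbs + b.valMinAbs).natAbs ∧
        (a.valMinAbs + b.valMinAbs).natAbs ≤ N / 2 := by
  have : NeZero N := ⟨hN.pos.ne'⟩
  constructor
  · intro h
    have hle := ZMod.natAbs_valMinAbs_add_le a b
    have hbound := ZMod.natAbs_valMinAbs_le (a + b)
    omega
  · rintro ⟨h, hle⟩
    rw [valMinAbs_add_of_odd hN hle, h]

lemma eq_of_cycleDist_eq_of_odd (hN : Odd N) {j l x y : ZMod N}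
    (hx : cycleDist N j x + cycleDist N x l = cycleDist N j l)
    (hy : cycleDist N j y + cycleDist N y l = cycleDist N j l)
    (hxy : cycleDist N j x = cycleDist N j y) : x = y := by
  simp only [cycleDist_eq_natAbs_valMinAbs] at hx hy hxy
  rw [← sub_add_sub_cancel' x j l, natAbs_valMinAbs_add_eq_iff_of_odd hN] at hx
  rw [← sub_add_sub_cancel' y j l, natAbs_valMinAbs_add_eq_iff_of_odd hN] at hy
  have hsum : (x - j).valMinAbs + (l - x).valMinAbs = (y - j).valMinAbs + (l - y).valMinAbs := by
    rw [← valMinAbs_add_of_odd hN hx.2, ← valMinAbs_add_of_odd hN hy.2, sub_add_sub_cancel',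
      sub_add_sub_cancel']
  have hval : (x - j).valMinAbs = (y - j).valMinAbs := by omega
  exact sub_left_inj.mp (ZMod.injective_valMinAbs hval)

lemma IsShortestWalk.apply_eq_of_odd (hN : Odd N) {j l : ZMod N} {f g : ℕ → ZMod N}
    (hf : IsShortestWalk N j l f) (hg : IsShortestWalk N j l g) {t : ℕ}
    (ht : t ≤ cycleDist N j l) : f t = g t := by
  obtain ⟨hjf, hfl⟩ := hf.cycleDist_apply ht
  obtain ⟨hjg, hgl⟩ := hg.cycleDist_apply ht
  exact eq_of_cycleDist_eq_of_odd (l := l) hN (by omega) (by omega) (hjf.trans hjg.symm)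

end OddCycle

section Counting

variable {N : ℕ}

/-- The pairs `(x, y)` of nonzero integers of the same sign with `|x + y| ≤ m`: the signed
displacements `j → i` and `i → l` for the shortest walks from `j` to `l` through an interior
vertex `i` in a cycle of length `2m + 1`. The equality case of the triangle inequality expresses
the agreement of signs. -/
def sameSignPairs (m : ℕ) : Set (ℤ × ℤ) :=
  {p | p.1 ≠ 0 ∧ p.2 ≠ 0 ∧ p.1.natAbs + p.2.natAbs = (p.1 + p.2).natAbs ∧
    (p.1 + p.2).natAbs ≤ m}

-- A positive pair `(x, y)` is recorded by `x < x + y`, a negative one by `-(x + y) > -x`.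
lemma bijOn_sameSignPairs_offDiag (m : ℕ) :
    Set.BijOn (fun p : ℤ × ℤ ↦ if 0 < p.1 then (p.1, p.1 + p.2) else (-(p.1 + p.2), -p.1))
      (sameSignPairs m) (Finset.Icc (1 : ℤ) m).offDiag := by
  let recover : ℤ × ℤ → ℤ × ℤ := fun q ↦ (if q.1 < q.2 then q.1 else -q.2, q.2 - q.1)
  refine Set.InvOn.bijOn (f' := recover) ⟨?_, ?_⟩ ?_ ?_
  · rintro ⟨x, y⟩ ⟨hx, hy, hadd, -⟩
    grind
  · rintro ⟨a, b⟩ hab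
    grind
  · rintro ⟨x, y⟩ ⟨hx, hy, hadd, hle⟩
    grind
  · rintro ⟨a, b⟩ hab
    obtain ⟨ha, hb, hne⟩ := Finset.mem_offDiag.mp hab
    rw [Finset.mem_Icc] at ha hb
    simp only [sameSignPairs, Set.mem_ofPred_eq, recover]
    grind

lemma ncard_sameSignPairs (m : ℕ) : (sameSignPairs m).ncard = m * (m - 1) := by
  rw [(bijOn_sameSignPairs_offDiag m).ncard_eq, Set.ncard_coe_finset, Finset.offDiag_card,
    Int.card_Icc, add_sub_cancel_right, Int.toNat_natCast, Nat.mul_sub_one]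

lemma isInteriorVertex_iff_mem_sameSignPairs (hN : Odd N) {i j l : ZMod N} :
    IsInteriorVertex N i j l ↔
      ((i - j).valMinAbs, (l - i).valMinAbs) ∈ sameSignPairs (N / 2) := by
  rw [isInteriorVertex_iff, ne_comm, ne_comm (a := i) (b := l)]
  simp only [cycleDist_eq_natAbs_valMinAbs, sameSignPairs, Set.mem_ofPred_eq, ne_eq,
    ZMod.valMinAbs_eq_zero, sub_eq_zero, ← natAbs_valMinAbs_add_eq_iff_of_odd hN,
    sub_add_sub_cancel']

lemma sameSignPairs_subset_range (hN : Odd N) (i : ZMod N) :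
    sameSignPairs (N / 2) ⊆
      Set.range fun p : ZMod N × ZMod N ↦ ((i - p.1).valMinAbs, (p.2 - i).valMinAbs) := by
  rintro ⟨x, y⟩ ⟨-, -, hadd, hle⟩
  dsimp only at hadd hle
  refine ⟨(i - x, i + y), ?_⟩
  simp only [sub_sub_cancel, add_sub_cancel_left]
  rw [valMinAbs_intCast_of_odd hN (by omega : x.natAbs ≤ N / 2),
    valMinAbs_intCast_of_odd hN (by omega : y.natAbs ≤ N / 2)]

lemma ncard_isInteriorVertex (hN : Odd N) (i : ZMod N) :
    {p : ZMod N × ZMod N | IsInteriorVertex N i p.1 p.2}.ncard = N / 2 * (N / 2 - 1) := by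
  have hinj : Function.Injective
      fun p : ZMod N × ZMod N ↦ ((i - p.1).valMinAbs, (p.2 - i).valMinAbs) := by
    rintro ⟨j, l⟩ ⟨j', l'⟩ h
    simpa using h
  rw [← ncard_sameSignPairs,
    ← Set.ncard_preimage_of_injective_subset_range hinj (sameSignPairs_subset_range hN i)]
  congr 1
  ext p
  exact isInteriorVertex_iff_mem_sameSignPairs hN

lemma half_mul_half_sub_one_of_odd (hN : Odd N) :
    N / 2 * (N / 2 - 1) = (N - 1) * (N - 3) / 4 := by
  obtain ⟨m, rfl⟩ := hN
  have hhalf : (2 * m + 1) / 2 = m := by omega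
  have hfactor : (2 * m + 1 - 1) * (2 * m + 1 - 3) = 4 * (m * (m - 1)) := by
    rw [show 2 * m + 1 - 1 = 2 * m by omega, show 2 * m + 1 - 3 = 2 * (m - 1) by omega]
    ring
  rw [hhalf, hfactor, Nat.mul_div_cancel_left _ four_pos]

end Counting

/-- **Node loading of a ring with an odd number of nodes.**
Let `N ≥ 3` be odd and consider the cycle on `ZMod N`.  (1) Every ordered pair
of distinct vertices has a unique shortest path: any two walks of minimal
length between them coincide.  (2) For any fixed vertex `i`, the number of
ordered pairs `(j, l)` of vertices distinct from each other and from `i` such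
that `i` is an interior vertex of the (unique) shortest path from `j` to `l`
equals `(N−1)(N−3)/4`. -/
theorem ring_node_loading_odd (N : ℕ) (hN : 3 ≤ N) (hodd : Odd N)
    (i : ZMod N) :
    (∀ j l : ZMod N, j ≠ l → ∀ f g : ℕ → ZMod N,
      (f 0 = j ∧ f (cycleDist N j l) = l ∧ cycleWalk N (cycleDist N j l) f) →
      (g 0 = j ∧ g (cycleDist N j l) = l ∧ cycleWalk N (cycleDist N j l) g) →
      ∀ t ≤ cycleDist N j l, f t = g t) ∧
    Nat.card {p : ZMod N × ZMod N // p.1 ≠ p.2 ∧ p.1 ≠ i ∧ p.2 ≠ i ∧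
        ∃ f : ℕ → ZMod N, f 0 = p.1 ∧ f (cycleDist N p.1 p.2) = p.2 ∧
          cycleWalk N (cycleDist N p.1 p.2) f ∧
          ∃ t : ℕ, 0 < t ∧ t < cycleDist N p.1 p.2 ∧ f t = i}
      = (N - 1) * (N - 3) / 4 := by
  refine ⟨fun j l _ f g hf hg t ht ↦ IsShortestWalk.apply_eq_of_odd hodd hf hg ht, ?_⟩
  calc
    _ = Nat.card {p : ZMod N × ZMod N | IsInteriorVertex N i p.1 p.2} := by
      refine Nat.card_congr (Equiv.subtypeEquivRight fun p ↦ ⟨?_, fun h ↦ ?_⟩)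
      · rintro ⟨-, -, -, f, hstart, hend, hwalk, hinterior⟩
        exact ⟨f, ⟨hstart, hend, hwalk⟩, hinterior⟩
      · obtain ⟨hji, hil, -⟩ := isInteriorVertex_iff.mp h
        have hjl := h.ne
        obtain ⟨f, ⟨hstart, hend, hwalk⟩, hinterior⟩ := h
        exact ⟨hjl, hji, hil.symm, f, hstart, hend, hwalk, hinterior⟩
    _ = N / 2 * (N / 2 - 1) := (Nat.card_coe_set_eq _).trans (ncard_isInteriorVertex hodd i)
    _ = (N - 1) * (N - 3) / 4 := half_mul_half_sub_one_of_odd hodd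
end

section
/- Let N ≥ 4 be an even integer, and consider the cycle (ring) on vertex set ZMod N in which j is adjacent to j+1 and j−1. Route each ordered pair (j, l) of distinct vertices along its unique shortest path if their cycle distance is less than N/2, and along the path j, j+1, …, j+N/2 in the positive direction if l = j + N/2 (tie-breaking antipodal pairs in the positive direction). Then for any fixed vertex i, the number of ordered pairs (j, l) with j ≠ l, j ≠ i, l ≠ i such that i is an interior vertex of the route from j to l equals (N−2)²/4. -/
/-- In the cycle on `ZMod N`, `i` is an interior vertex of the route from `j`
to `l`, where the route follows the unique shortest path when the cycle
distance is less than `N/2`, and goes in the positive direction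
`j, j+1, …, j + N/2` for antipodal pairs (tie-breaking in the positive
direction).  Concretely, letting `d = (l − j).val`: if `d ≤ N/2` the route is
`j, j+1, …, j+d` (positive direction), otherwise it is `j, j−1, …, j−(N−d)`
(negative direction); `i` is interior if it is hit strictly between the two
endpoints. -/
def ringRouteInterior (N : ℕ) (j l i : ZMod N) : Prop :=
  if (l - j).val ≤ N / 2 then
    ∃ t : ℕ, 0 < t ∧ t < (l - j).val ∧ i = j + (t : ZMod N)
  else
    ∃ t : ℕ, 0 < t ∧ t < N - (l - j).val ∧ i = j - (t : ZMod N)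

/-! Fix `i` and record a pair `(j, l)` by its offsets `a = i - j` and `b = l - i`, taken in
`{0, …, N - 1}`. With `h = ⌊N/2⌋` and `c = ⌈N/2⌉`, the route from `j` to `l` passes through `i` in
the positive direction iff `a, b > 0` and `a + b ≤ h`, and in the negative direction iff
`a + b > N + h`. These are two triangles of offsets; translating the second by `(-c, -h)` fits it
exactly against the first, and together they fill the rectangle `[1, h - 1] × [1, c - 1]`. -/

section Offsets

/-- The offset pairs `(i - j, l - i)`, as representatives in `{0, …, N - 1}`, of the routes `j → l`
having `i` in their interior, on a ring with `N = h + c` nodes whose positive routes are those of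
length at most `h`. -/
def transitOffsets (h c : ℕ) : Finset (ℕ × ℕ) :=
  {q ∈ Finset.Ico 1 (h + c) ×ˢ Finset.Ico 1 (h + c) |
    q.1 + q.2 ≤ h ∨ h + c + h < q.1 + q.2}

variable {h c : ℕ}

lemma mem_transitOffsets {a b : ℕ} :
    (a, b) ∈ transitOffsets h c ↔ ((1 ≤ a ∧ a < h + c) ∧ 1 ≤ b ∧ b < h + c) ∧
      (a + b ≤ h ∨ h + c + h < a + b) := by
  simp only [transitOffsets, Finset.mem_filter, Finset.mem_product, Finset.mem_Ico]

lemma card_transitOffsets (hhc : h ≤ c) (hch : c ≤ h + 1) :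
    (transitOffsets h c).card = (h - 1) * (c - 1) := by
  have card_rectangle : (Finset.Ico 1 h ×ˢ Finset.Ico 1 c).card = (h - 1) * (c - 1) := by
    rw [Finset.card_product, Nat.card_Ico, Nat.card_Ico]
  rw [← card_rectangle]
  refine Finset.card_nbij'
    (fun q ↦ if q.1 + q.2 ≤ h then q else (q.1 - c, q.2 - h))
    (fun q ↦ if q.1 + q.2 ≤ h then q else (q.1 + c, q.2 + h)) ?_ ?_ ?_ ?_ <;>
  · rintro ⟨a, b⟩ hab
    simp only [Finset.mem_coe, mem_transitOffsets, Finset.mem_product, Finset.mem_Ico] at hab ⊢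
    grind [mem_transitOffsets]

end Offsets

section Routes

variable {N : ℕ} [NeZero N]

lemma exists_pos_lt_eq_natCast_iff {d : ℕ} (hd : d ≤ N) (x : ZMod N) :
    (∃ t : ℕ, 0 < t ∧ t < d ∧ x = (t : ZMod N)) ↔ 0 < x.val ∧ x.val < d := by
  constructor
  · rintro ⟨t, ht_pos, ht_lt, rfl⟩
    rw [ZMod.val_cast_of_lt (ht_lt.trans_le hd)]
    exact ⟨ht_pos, ht_lt⟩
  · rintro ⟨hx_pos, hx_lt⟩
    exact ⟨x.val, hx_pos, hx_lt, (ZMod.natCast_zmod_val x).symm⟩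

lemma ringRouteInterior_iff_val (j l i : ZMod N) :
    ringRouteInterior N j l i ↔
      if (l - j).val ≤ N / 2 then 0 < (i - j).val ∧ (i - j).val < (l - j).val
      else 0 < (j - i).val ∧ (j - i).val < N - (l - j).val := by
  rw [← exists_pos_lt_eq_natCast_iff (ZMod.val_lt _).le,
    ← exists_pos_lt_eq_natCast_iff (Nat.sub_le _ _)]
  simp only [ringRouteInterior, sub_eq_iff_eq_add', eq_sub_iff_add_eq, eq_comm]

lemma ringRouteInterior_iff_mem_transitOffsets (j l i : ZMod N) :
    ringRouteInterior N j l i ↔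
      ((i - j).val, (l - i).val) ∈ transitOffsets (N / 2) ((N + 1) / 2) := by
  have val_sub : (l - j).val = ((i - j).val + (l - i).val) % N := by
    rw [← ZMod.val_add, sub_add_sub_cancel']
  have val_sub_symm : (j - i).val = if (i - j).val = 0 then 0 else N - (i - j).val := by
    simp only [← neg_sub i j, ZMod.neg_val, ZMod.val_eq_zero]
  have lt_i_j := ZMod.val_lt (i - j)
  have lt_l_i := ZMod.val_lt (l - i)
  rw [ringRouteInterior_iff_val, mem_transitOffsets, val_sub, val_sub_symm]
  generalize (i - j).val = a at *
  generalize (l - i).val = b at *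
  rcases lt_or_ge (a + b) N with no_wrap | wrap
  · rw [Nat.mod_eq_of_lt no_wrap]
    split_ifs <;> omega
  · rw [Nat.mod_eq_sub_mod wrap, Nat.mod_eq_of_lt (by omega)]
    split_ifs <;> omega

lemma ringRouteInterior.pairwise_ne {j l i : ZMod N} (hi : ringRouteInterior N j l i) :
    j ≠ l ∧ j ≠ i ∧ l ≠ i := by
  refine ⟨?_, ?_, ?_⟩
  · rintro rfl
    simp [ringRouteInterior_iff_val] at hi
  · rintro rfl
    simp [ringRouteInterior_iff_mem_transitOffsets, mem_transitOffsets] at hi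
  · rintro rfl
    simp [ringRouteInterior_iff_mem_transitOffsets, mem_transitOffsets] at hi

lemma card_ringRouteInterior (i : ZMod N) :
    Nat.card {p : ZMod N × ZMod N // ringRouteInterior N p.1 p.2 i} =
      (transitOffsets (N / 2) ((N + 1) / 2)).card := by
  classical
  have val_natCast_offsets {a b : ℕ} (hab : (a, b) ∈ transitOffsets (N / 2) ((N + 1) / 2)) :
      (a : ZMod N).val = a ∧ (b : ZMod N).val = b := by
    rw [mem_transitOffsets] at hab
    exact ⟨ZMod.val_cast_of_lt (by omega), ZMod.val_cast_of_lt (by omega)⟩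
  rw [Nat.card_eq_fintype_card, Fintype.card_subtype]
  refine Finset.card_nbij' (fun p ↦ ((i - p.1).val, (p.2 - i).val))
    (fun q ↦ (i - (q.1 : ZMod N), i + (q.2 : ZMod N))) ?_ ?_ ?_ ?_
  · rintro ⟨j, l⟩ hi
    simpa [ringRouteInterior_iff_mem_transitOffsets] using hi
  · rintro ⟨a, b⟩ hab
    simpa [ringRouteInterior_iff_mem_transitOffsets, val_natCast_offsets hab] using hab
  · rintro ⟨j, l⟩ -
    simp
  · rintro ⟨a, b⟩ hab
    simp [val_natCast_offsets hab]

end Routes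

theorem ring_node_loading_even_general (N : ℕ) [NeZero N] (i : ZMod N) :
    Nat.card {p : ZMod N × ZMod N // p.1 ≠ p.2 ∧ p.1 ≠ i ∧ p.2 ≠ i ∧
        ringRouteInterior N p.1 p.2 i}
      = (N / 2 - 1) * ((N + 1) / 2 - 1) := by
  have distinct_iff (p : ZMod N × ZMod N) :
      (p.1 ≠ p.2 ∧ p.1 ≠ i ∧ p.2 ≠ i ∧ ringRouteInterior N p.1 p.2 i) ↔
        ringRouteInterior N p.1 p.2 i :=
    ⟨fun hp ↦ hp.2.2.2, fun hp ↦ by simpa [and_assoc, hp] using hp.pairwise_ne⟩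
  simp only [distinct_iff]
  rw [card_ringRouteInterior, card_transitOffsets (by omega) (by omega)]

/-- **Node loading of a ring with an even number of nodes.**
Let `N ≥ 4` be even and consider the cycle on `ZMod N`, with each ordered pair
`(j, l)` of distinct vertices routed along its unique shortest path when their
cycle distance is less than `N/2`, and along the positive-direction path
`j, j+1, …, j + N/2` when `l = j + N/2`.  Then for any fixed vertex `i`, the
number of ordered pairs `(j, l)`, with `j, l, i` pairwise distinct, such that
`i` is an interior vertex of the route from `j` to `l` equals `(N−2)²/4`. -/
theorem ring_node_loading_even (N : ℕ) (hN : 4 ≤ N) (heven : Even N)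
    (i : ZMod N) :
    Nat.card {p : ZMod N × ZMod N // p.1 ≠ p.2 ∧ p.1 ≠ i ∧ p.2 ≠ i ∧
        ringRouteInterior N p.1 p.2 i}
      = (N - 2) ^ 2 / 4 := by
  have : NeZero N := ⟨by omega⟩
  obtain ⟨m, rfl⟩ := heven.two_dvd
  have sq_eq : (2 * m - 2) ^ 2 = 4 * ((m - 1) * (m - 1)) := by rw [← Nat.mul_sub_one]; ring
  rw [ring_node_loading_even_general, sq_eq, Nat.mul_div_cancel_left _ four_pos,
    show 2 * m / 2 = m by omega, show (2 * m + 1) / 2 = m by omega]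
end

section
/- Consider the vertex set of all strings of length D over an alphabet of size Δ (functions Fin D → Fin Δ), with Δ ≥ 2 and D ≥ 1, and the digit-correcting route from i to j defined as follows: starting at i, repeatedly replace, at the leftmost position where the current string differs from j, the current digit by the corresponding digit of j, until reaching j (the route visits dist_H(i,j) + 1 strings, where dist_H is Hamming distance). Then for every fixed vertex k, the number of ordered pairs (i, j) such that k appears on the route from i to j with k ≠ i and k ≠ j equals Δ^{D−1}·(D·(Δ−1) − Δ) + 1. -/
/-- `k` lies on the digit-correcting (prefix-correcting) route from `i` to
`j`: starting at `i`, digits are corrected to those of `j` one at a time in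
increasing order of position, so the nodes visited are exactly the strings
that agree with `j` on an initial segment of positions and with `i` on the
remaining positions. -/
def onDigitRoute {Δ D : ℕ} (i j k : Fin D → Fin Δ) : Prop :=
  ∃ P : ℕ, (∀ t : Fin D, t.val < P → k t = j t) ∧
    (∀ t : Fin D, P ≤ t.val → k t = i t)

/-!
If `k` lies on the route from `i` to `j` and `k ≠ i`, the route reaches `k` by correcting the last
digit `t` at which `i` and `k` differ, so `j` agrees with `k` up to `t`. For fixed `t`, each
position other than `t` leaves exactly one of the two strings free (`i` before `t`, `j` after it),
which gives `(Δ - 1) * Δ ^ (D - 1)` pairs; summing over `t` gives `D * (Δ - 1) * Δ ^ (D - 1)`.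
Among these pairs, the ones with `j = k` are the `Δ ^ D - 1` pairs `(i, k)` with `i ≠ k`.
-/

open Finset

section Arrivals

variable {ι α : Type*}

theorem exists_last_ne [Preorder ι] [WellFoundedGT ι] {x y : ι → α} (hxy : x ≠ y) :
    ∃ t, x t ≠ y t ∧ ∀ s, t < s → x s = y s := by
  obtain ⟨t, ht, hmax⟩ := wellFounded_gt.has_min {t | x t ≠ y t} (Function.ne_iff.mp hxy)
  exact ⟨t, ht, fun s hts => not_not.mp fun hs => hmax s hs hts⟩

variable [Fintype ι] [LinearOrder ι] [Fintype α] [DecidableEq α]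

/-- The strings whose last difference from `k` is at position `t`. -/
def lastDiffAt (k : ι → α) (t : ι) : Finset (ι → α) :=
  {i | i t ≠ k t ∧ ∀ s, t < s → i s = k s}

/-- The strings sharing with `k` the prefix that ends at position `t`, inclusive. -/
def agreeUpTo (k : ι → α) (t : ι) : Finset (ι → α) :=
  {j | ∀ s ≤ t, j s = k s}

/-- The source-target pairs `(i, j)` whose digit-correcting route arrives at `k` by the hop that
changes digit `t`. It is phrased without `onDigitRoute`, for an arbitrary finite linear order of
positions. -/
def hopArrivals (k : ι → α) (t : ι) : Finset ((ι → α) × (ι → α)) :=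
  lastDiffAt k t ×ˢ agreeUpTo k t

/-- The pairs `(i, j)` with `i ≠ k` whose digit-correcting route visits `k`, sorted by the digit
changed on arrival. -/
def arrivals (k : ι → α) : Finset ((ι → α) × (ι → α)) :=
  univ.biUnion (hopArrivals k)

theorem mem_arrivals {k i j : ι → α} :
    (i, j) ∈ arrivals k ↔
      ∃ t, (i t ≠ k t ∧ ∀ s, t < s → i s = k s) ∧ ∀ s ≤ t, j s = k s := by
  simp [arrivals, hopArrivals, lastDiffAt, agreeUpTo]

theorem lastDiffAt_eq_piFinset (k : ι → α) (t : ι) :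
    lastDiffAt k t =
      Fintype.piFinset fun s => if s < t then univ else if s = t then {k s}ᶜ else {k s} := by
  ext i
  simp only [lastDiffAt, mem_filter_univ, Fintype.mem_piFinset]
  constructor
  · rintro ⟨hne, heq⟩ s
    rcases lt_trichotomy s t with hst | rfl | hts
    · simp [hst]
    · simpa using hne
    · simpa [hts.not_gt, hts.ne'] using heq s hts
  · intro h
    exact ⟨by simpa using h t, fun s hts => by simpa [hts.not_gt, hts.ne'] using h s⟩

theorem agreeUpTo_eq_piFinset (k : ι → α) (t : ι) :
    agreeUpTo k t = Fintype.piFinset fun s => if s ≤ t then {k s} else univ := by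
  ext j
  simp only [agreeUpTo, mem_filter_univ, Fintype.mem_piFinset]
  refine forall_congr' fun s => ?_
  split_ifs with hst <;> simp [hst]

theorem card_hopArrivals (k : ι → α) (t : ι) :
    #(hopArrivals k t) = (Fintype.card α - 1) * Fintype.card α ^ (Fintype.card ι - 1) := by
  have choices_at (s : ι) :
      #(if s < t then univ else if s = t then {k s}ᶜ else {k s}) *
          #(if s ≤ t then {k s} else univ) =
        if s = t then Fintype.card α - 1 else Fintype.card α := by
    rcases lt_trichotomy s t with hst | rfl | hts
    · simp [hst, hst.le, hst.ne]
    · simp [card_compl]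
    · simp [hts.not_gt, hts.not_ge, hts.ne']
  calc #(hopArrivals k t)
      = ∏ s, if s = t then Fintype.card α - 1 else Fintype.card α := by
        simp only [hopArrivals, card_product, lastDiffAt_eq_piFinset, agreeUpTo_eq_piFinset,
          Fintype.card_piFinset, ← prod_mul_distrib, choices_at]
    _ = (Fintype.card α - 1) * Fintype.card α ^ (Fintype.card ι - 1) := by
        simp [prod_ite, filter_eq', filter_ne', card_erase_of_mem]

theorem pairwise_disjoint_lastDiffAt (k : ι → α) :
    Pairwise (Function.onFun Disjoint (lastDiffAt k)) := by
  refine (pairwise_disjoint_on _).mpr fun t u htu => disjoint_left.mpr fun i hit hiu => ?_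
  simp only [lastDiffAt, mem_filter_univ] at hit hiu
  exact hiu.1 (hit.2 u htu)

theorem card_arrivals (k : ι → α) :
    #(arrivals k) =
      Fintype.card ι * ((Fintype.card α - 1) * Fintype.card α ^ (Fintype.card ι - 1)) := by
  have hdisj : ((univ : Finset ι) : Set ι).PairwiseDisjoint (hopArrivals k) := fun _ _ _ _ htu =>
    disjoint_product.mpr (Or.inl (pairwise_disjoint_lastDiffAt k htu))
  simp [arrivals, card_biUnion hdisj, card_hopArrivals]

theorem compl_product_singleton_subset_arrivals (k : ι → α) :
    ({k}ᶜ ×ˢ {k} : Finset ((ι → α) × (ι → α))) ⊆ arrivals k := by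
  rintro ⟨i, j⟩ hij
  simp only [mem_product, mem_compl, mem_singleton] at hij
  obtain ⟨hik, rfl⟩ := hij
  obtain ⟨t, ht⟩ := exists_last_ne hik
  exact mem_arrivals.mpr ⟨t, ht, fun _ _ => rfl⟩

end Arrivals

theorem mem_arrivals_iff_onDigitRoute {Δ D : ℕ} {i j k : Fin D → Fin Δ} :
    (i, j) ∈ arrivals k ↔ onDigitRoute i j k ∧ k ≠ i := by
  rw [mem_arrivals]
  constructor
  · rintro ⟨t, ⟨hne, hsuffix⟩, hprefix⟩
    refine ⟨⟨t + 1, fun s hs => ?_, fun s hs => ?_⟩, fun hki => hne (congrFun hki t).symm⟩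
    · exact (hprefix s (Nat.lt_succ_iff.mp hs)).symm
    · exact (hsuffix s hs).symm
  · rintro ⟨⟨P, hprefix, hsuffix⟩, hki⟩
    obtain ⟨t, hne, hlast⟩ := exists_last_ne hki.symm
    have htP : t.val < P := not_le.mp fun hPt => hne (hsuffix t hPt).symm
    exact ⟨t, ⟨hne, hlast⟩, fun s hst => (hprefix s (lt_of_le_of_lt hst htP)).symm⟩

/-- **Routing load under prefix-correcting (Plaxton-tree) routing.**
On the fully populated identifier space of strings of length `D ≥ 1` over an
alphabet of size `Δ ≥ 2`, route each ordered pair `(i, j)` by correcting one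
digit at a time in increasing position order.  Then for every fixed vertex
`k`, the number of ordered pairs `(i, j)` such that `k` appears on the route
from `i` to `j` with `k ≠ i` and `k ≠ j` equals
`Δ^{D−1}·(D·(Δ−1) − Δ) + 1`. -/
theorem plaxton_routing_load (Δ D : ℕ) (hΔ : 2 ≤ Δ) (hD : 1 ≤ D)
    (k : Fin D → Fin Δ) :
    (Nat.card {p : (Fin D → Fin Δ) × (Fin D → Fin Δ) //
        onDigitRoute p.1 p.2 k ∧ k ≠ p.1 ∧ k ≠ p.2} : ℤ)
      = (Δ : ℤ) ^ (D - 1) * ((D : ℤ) * ((Δ : ℤ) - 1) - (Δ : ℤ)) + 1 := by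
  have hload : Nat.card {p : (Fin D → Fin Δ) × (Fin D → Fin Δ) //
      onDigitRoute p.1 p.2 k ∧ k ≠ p.1 ∧ k ≠ p.2} = #(arrivals k \ ({k}ᶜ ×ˢ {k})) := by
    refine Nat.subtype_card _ fun ⟨i, j⟩ => ?_
    simp only [mem_sdiff, mem_arrivals_iff_onDigitRoute, mem_product, mem_compl, mem_singleton]
    grind
  have hΔ1 : 1 ≤ Δ := by omega
  have hpow : 1 ≤ Δ ^ D := Nat.one_le_pow _ _ hΔ1
  rw [hload, cast_card_sdiff (compl_product_singleton_subset_arrivals k), card_arrivals]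
  simp only [card_product, card_compl, card_singleton, Fintype.card_fun, Fintype.card_fin, mul_one]
  push_cast [hΔ1, hpow]
  rw [← mul_pow_sub_one (by omega : D ≠ 0) (Δ : ℤ)]
  ring
end
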